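/- arXiv:2402.04943 — 2 statements merged into one kernel-verified Lean document; each statement's English description precedes it below -/
import Mathlib

section
/- The cookie encoding encode : List Bool → List (Fin 3) is injective, and moreover the cookie hash H : List Bool → Matrix (Fin 2) (Fin 2) ℤ is injective: if H(u) = H(v) as integer matrices, then u = v. -/
open Matrix

def A : Matrix (Fin 2) (Fin 2) ℤ := !![1, 2; 0, 1]
def B : Matrix (Fin 2) (Fin 2) ℤ := !![1, 0; 2, 1]
def C : Matrix (Fin 2) (Fin 2) ℤ := !![2, 1; 1, 1]

/-- Auxiliary state machine for the cookie encoding.  The first argument is the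
mode (`false` = normal, `true` = cookie), the second counts the current run of
identical bits relevant to a mode switch (consecutive 1s in normal mode,
consecutive 0s in cookie mode). -/
def encodeAux : Bool → ℕ → List Bool → List (Fin 3)
  | _, _, [] => []
  | false, r, b :: rest =>
      if b then
        (1 : Fin 3) ::
          (if r + 1 ≥ 3 then encodeAux true 0 rest else encodeAux false (r + 1) rest)
      else
        (0 : Fin 3) :: encodeAux false 0 rest
  | true, r, b :: rest =>
      if b then
        (2 : Fin 3) :: encodeAux true 0 rest
      else
        (0 : Fin 3) ::
          (if r + 1 ≥ 3 then encodeAux false 0 rest else encodeAux true (r + 1) rest)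

/-- The cookie encoding: in normal mode, 0 ↦ 0 and 1 ↦ 1, switching to cookie
mode after three consecutive 1 bits; in cookie mode, 0 ↦ 0 and 1 ↦ 2, switching
back to normal mode after three consecutive 0 bits. -/
def encode : List Bool → List (Fin 3) :=
  encodeAux false 0

/-- The cookie hash: the ordered product of the matrices `A`, `B`, `C`
corresponding to the symbols 0, 1, 2 of the cookie encoding. -/
def H (u : List Bool) : Matrix (Fin 2) (Fin 2) ℤ :=
  ((encode u).map (![A, B, C])).prod

/-!
The nonzero symbols of `encode u` sit exactly at the `1` bits of `u`, so `u` can be read off its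
encoding. For the hash, ping-pong: `A`, `C` and `B` are injective and send the open positive
quadrant into its disjoint cones `x > 2y`, `2y > x > y` and `y > 2x` respectively, all of which
miss the vector `(1, 1)`. Hence the image of `(1, 1)` under a product of these matrices determines
the word.
-/

open Function Set

theorem foldr_injective_of_pingPong {ι α : Type*} {f : ι → α → α} {S : Set α} {T : ι → Set α}
    {a : α} (haS : a ∈ S) (haT : ∀ i, a ∉ T i) (hTS : ∀ i, T i ⊆ S)
    (hT : Pairwise (Disjoint on T)) (hmaps : ∀ i, MapsTo (f i) S (T i))
    (hinj : ∀ i, InjOn (f i) S) : Injective (List.foldr f a) := by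
  have foldr_mem : ∀ l : List ι, l.foldr f a ∈ S := fun l ↦ by
    induction l with
    | nil => exact haS
    | cons i l ih => exact hTS i (hmaps i ih)
  have foldr_cons_mem : ∀ i l, (i :: l).foldr f a ∈ T i := fun i l ↦ hmaps i (foldr_mem l)
  intro l
  induction l with
  | nil =>
    rintro (_ | ⟨j, k⟩) h
    · rfl
    · exact absurd (h.symm ▸ foldr_cons_mem j k : [].foldr f a ∈ T j) (haT j)
  | cons i l ih =>
    rintro (_ | ⟨j, k⟩) h
    · exact absurd (h ▸ foldr_cons_mem i l : [].foldr f a ∈ T i) (haT i)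
    · obtain rfl : i = j := hT.eq (not_disjoint_iff.mpr
        ⟨_, foldr_cons_mem i l, h ▸ foldr_cons_mem j k⟩)
      rw [ih (hinj i (foldr_mem l) (foldr_mem k) h)]

theorem prod_map_mulVec_eq_foldr {ι n R : Type*} [Fintype n] [DecidableEq n] [Semiring R]
    (M : ι → Matrix n n R) (l : List ι) (v : n → R) :
    (l.map M).prod *ᵥ v = l.foldr (fun i w ↦ M i *ᵥ w) v := by
  induction l with
  | nil => simp
  | cons i l ih => simp [← mulVec_mulVec, ih]

theorem prod_map_injective_of_mulVec_pingPong {ι n R : Type*} [Fintype n] [DecidableEq n]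
    [Semiring R] {M : ι → Matrix n n R} {S : Set (n → R)} {T : ι → Set (n → R)} {v : n → R}
    (hvS : v ∈ S) (hvT : ∀ i, v ∉ T i) (hTS : ∀ i, T i ⊆ S) (hT : Pairwise (Disjoint on T))
    (hmaps : ∀ i, MapsTo (M i *ᵥ ·) S (T i)) (hinj : ∀ i, InjOn (M i *ᵥ ·) S) :
    Injective fun l : List ι ↦ (l.map M).prod := by
  refine Injective.of_comp (f := (· *ᵥ v)) ?_
  simpa only [comp_def, prod_map_mulVec_eq_foldr] using
    foldr_injective_of_pingPong hvS hvT hTS hT hmaps hinj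

/-- The open positive quadrant of `ℤ²`, the set on which `A`, `B` and `C` play ping-pong. -/
def positiveQuadrant : Set (Fin 2 → ℤ) := {v | 0 < v 0 ∧ 0 < v 1}

/-- The ping-pong cones in the open positive quadrant, indexed by the symbols of the cookie
encoding: the cone of a symbol contains the image of the quadrant under the matrix of that
symbol. -/
def pingPongCone : Fin 3 → Set (Fin 2 → ℤ)
  | 0 => {v | 0 < v 1 ∧ 2 * v 1 < v 0}
  | 1 => {v | 0 < v 0 ∧ 2 * v 0 < v 1}
  | 2 => {v | v 1 < v 0 ∧ v 0 < 2 * v 1}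

theorem pingPongCone_subset_positiveQuadrant : ∀ s, pingPongCone s ⊆ positiveQuadrant
  | 0, _, ⟨_, _⟩ | 1, _, ⟨_, _⟩ | 2, _, ⟨_, _⟩ => ⟨by lia, by lia⟩

theorem pairwise_disjoint_pingPongCone : Pairwise (Disjoint on pingPongCone) := by
  intro s t hst
  refine disjoint_left.mpr fun v hs ht ↦ ?_
  match s, t, hs, ht with
  | 0, 0, _, _ | 1, 1, _, _ | 2, 2, _, _ => exact hst rfl
  | 0, 1, ⟨_, _⟩, ⟨_, _⟩ | 0, 2, ⟨_, _⟩, ⟨_, _⟩ | 1, 0, ⟨_, _⟩, ⟨_, _⟩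
  | 1, 2, ⟨_, _⟩, ⟨_, _⟩ | 2, 0, ⟨_, _⟩, ⟨_, _⟩ | 2, 1, ⟨_, _⟩, ⟨_, _⟩ => lia

theorem one_notMem_pingPongCone (s : Fin 3) : 1 ∉ pingPongCone s := by
  fin_cases s <;> simp [pingPongCone]

theorem A_mulVec (v : Fin 2 → ℤ) : A *ᵥ v = ![v 0 + 2 * v 1, v 1] := by
  simp [A, dotProduct]

theorem B_mulVec (v : Fin 2 → ℤ) : B *ᵥ v = ![v 0, 2 * v 0 + v 1] := by
  simp [B, dotProduct]

theorem C_mulVec (v : Fin 2 → ℤ) : C *ᵥ v = ![2 * v 0 + v 1, v 0 + v 1] := by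
  simp [C, dotProduct]

theorem mapsTo_mulVec_pingPongCone :
    ∀ s, MapsTo (![A, B, C] s *ᵥ ·) positiveQuadrant (pingPongCone s)
  | 0, v, ⟨_, _⟩ => by
    change A *ᵥ v ∈ _
    simp only [A_mulVec, pingPongCone, mem_ofPred_eq, cons_val_zero, cons_val_one]
    lia
  | 1, v, ⟨_, _⟩ => by
    change B *ᵥ v ∈ _
    simp only [B_mulVec, pingPongCone, mem_ofPred_eq, cons_val_zero, cons_val_one]
    lia
  | 2, v, ⟨_, _⟩ => by
    change C *ᵥ v ∈ _
    simp only [C_mulVec, pingPongCone, mem_ofPred_eq, cons_val_zero, cons_val_one]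
    lia

theorem det_generator (s : Fin 3) : (![A, B, C] s).det = 1 := by
  fin_cases s <;> simp [A, B, C, det_fin_two]

theorem mulVec_generator_injective (s : Fin 3) : Injective (![A, B, C] s *ᵥ ·) :=
  mulVec_injective_of_det_ne_zero (by simp [det_generator])

theorem prod_map_generator_injective :
    Injective fun l : List (Fin 3) ↦ (l.map ![A, B, C]).prod :=
  prod_map_injective_of_mulVec_pingPong (v := 1) (by simp [positiveQuadrant])
    one_notMem_pingPongCone pingPongCone_subset_positiveQuadrant pairwise_disjoint_pingPongCone
    mapsTo_mulVec_pingPongCone fun s ↦ (mulVec_generator_injective s).injOn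

theorem map_bne_zero_encodeAux (cookie : Bool) (r : ℕ) (u : List Bool) :
    (encodeAux cookie r u).map (· != 0) = u := by
  induction u generalizing cookie r with
  | nil => simp [encodeAux]
  | cons b u ih => cases cookie <;> cases b <;> grind [encodeAux]

theorem encode_injective : Injective encode :=
  LeftInverse.injective (map_bne_zero_encodeAux false 0)

/-- The cookie encoding is injective, and moreover the cookie hash itself is
injective as a map to 2×2 integer matrices. -/
theorem encode_and_hash_injective :
    Function.Injective encode ∧ Function.Injective H :=
  ⟨encode_injective, prod_map_generator_injective.comp encode_injective⟩
end

section
/- For every n ≥ 3, every entry of the 2×2 integer matrix B³ · C^{n−3}, where B = ![![1,0],![2,1]] and C = ![![2,1],![1,1]], is at most Nat.fib (2n+1), and hence (as a real number) at most ((7 + 3·√5)/2)^n. -/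
open Matrix

/-!
Right multiplication by `C` sends a row `(fib (n + 1), fib n)` to `(fib (n + 3), fib (n + 2))`, and
right multiplication by `B` sends it to something entrywise no larger. The rows of `B` and of `C`
are at most `(fib 3, fib 2)`, so a nonempty product of `k` factors `B` or `C` has rows at most
`(fib (2 * k + 1), fib (2 * k))`. Finally `fib (2 * k + 1) ≤ φ ^ (2 * k)`, and
`(7 + 3 * √5) / 2 = φ ^ 4`.
-/

theorem fib_succ_le_goldenRatio_pow (n : ℕ) :
    (Nat.fib (n + 1) : ℝ) ≤ Real.goldenRatio ^ n := by
  have hconj : Real.goldenConj * (Nat.fib n : ℝ) ≤ 0 :=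
    mul_nonpos_of_nonpos_of_nonneg Real.goldenConj_neg.le (Nat.cast_nonneg _)
  linarith [Real.fib_succ_sub_goldenConj_mul_fib n]

theorem goldenRatio_pow_four : Real.goldenRatio ^ 4 = (7 + 3 * √5) / 2 := by
  calc Real.goldenRatio ^ 4 = (Real.goldenRatio ^ 2) ^ 2 := by ring
    _ = 3 * Real.goldenRatio + 2 := by
      rw [Real.goldenRatio_sq, add_sq, Real.goldenRatio_sq]; ring
    _ = (7 + 3 * √5) / 2 := by rw [Real.goldenRatio]; ring

theorem goldenRatio_pow_two_mul_le (n : ℕ) :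
    Real.goldenRatio ^ (2 * n) ≤ ((7 + 3 * √5) / 2) ^ n := by
  rw [← goldenRatio_pow_four, ← pow_mul]
  exact pow_le_pow_right₀ Real.one_lt_goldenRatio.le (by lia)

/-- The row vector `v` is entrywise at most `(fib (n + 1), fib n)`, the invariant carried along
products of `B` and `C`. Entries may be negative; only upper bounds are recorded. -/
def FibBounded (n : ℕ) (v : Fin 2 → ℤ) : Prop :=
  v 0 ≤ Nat.fib (n + 1) ∧ v 1 ≤ Nat.fib n

namespace FibBounded

variable {n : ℕ} {v : Fin 2 → ℤ}

theorem apply_le_fib_succ (hv : FibBounded n v) (j : Fin 2) : v j ≤ Nat.fib (n + 1) := by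
  have hmono : (Nat.fib n : ℤ) ≤ Nat.fib (n + 1) := mod_cast Nat.fib_le_fib_succ
  fin_cases j
  exacts [hv.1, hv.2.trans hmono]

theorem vecMul_B (hv : FibBounded n v) : FibBounded (n + 2) (v ᵥ* B) := by
  obtain ⟨h0, h1⟩ := hv
  have hfst : (v ᵥ* B) 0 = v 0 + 2 * v 1 := by simp [B, vecMul_apply_eq_sum, mul_comm]
  have hsnd : (v ᵥ* B) 1 = v 1 := by simp [B, vecMul_apply_eq_sum]
  have hmono : Nat.fib n ≤ Nat.fib (n + 1) := Nat.fib_le_fib_succ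
  rw [FibBounded, hfst, hsnd, Nat.fib_add_two (n := n + 1), Nat.fib_add_two]
  constructor <;> lia

theorem vecMul_C (hv : FibBounded n v) : FibBounded (n + 2) (v ᵥ* C) := by
  obtain ⟨h0, h1⟩ := hv
  have hfst : (v ᵥ* C) 0 = 2 * v 0 + v 1 := by simp [C, vecMul_apply_eq_sum, mul_comm]
  have hsnd : (v ᵥ* C) 1 = v 0 + v 1 := by simp [C, vecMul_apply_eq_sum]
  rw [FibBounded, hfst, hsnd, Nat.fib_add_two (n := n + 1), Nat.fib_add_two]
  constructor <;> lia

theorem vecMul_list_prod (hv : FibBounded n v) {l : List (Matrix (Fin 2) (Fin 2) ℤ)}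
    (hl : ∀ M ∈ l, M = B ∨ M = C) : FibBounded (n + 2 * l.length) (v ᵥ* l.prod) := by
  induction l generalizing n v with
  | nil => simpa using hv
  | cons M l ih =>
    obtain ⟨hM, hl⟩ := List.forall_mem_cons.1 hl
    have hvM : FibBounded (n + 2) (v ᵥ* M) := by
      rcases hM with rfl | rfl
      exacts [hv.vecMul_B, hv.vecMul_C]
    rw [List.prod_cons, ← vecMul_vecMul, List.length_cons,
      show n + 2 * (l.length + 1) = n + 2 + 2 * l.length by ring]
    exact ih hvM hl

end FibBounded

theorem fibBounded_two_row {M : Matrix (Fin 2) (Fin 2) ℤ} (hM : M = B ∨ M = C) (i : Fin 2) :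
    FibBounded 2 (M i) := by
  rcases hM with rfl | rfl <;> fin_cases i <;> simp [FibBounded, B, C, Nat.fib_add_two]

theorem list_prod_apply_le_fib {l : List (Matrix (Fin 2) (Fin 2) ℤ)}
    (hl : ∀ M ∈ l, M = B ∨ M = C) (i j : Fin 2) :
    l.prod i j ≤ Nat.fib (2 * l.length + 1) := by
  -- The second row of the identity is not `FibBounded 0`, so the invariant starts at one factor.
  cases l with
  | nil => fin_cases i <;> fin_cases j <;> simp
  | cons M l =>
    obtain ⟨hM, hl⟩ := List.forall_mem_cons.1 hl
    have hrow := (fibBounded_two_row hM i).vecMul_list_prod hl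
    rw [List.prod_cons, mul_apply_eq_vecMul, List.length_cons,
      show 2 * (l.length + 1) = 2 + 2 * l.length by ring]
    exact hrow.apply_le_fib_succ j

theorem all_ones_hash_entry_bound_general {l : List (Matrix (Fin 2) (Fin 2) ℤ)}
    (hl : ∀ M ∈ l, M = B ∨ M = C) (i j : Fin 2) :
    l.prod i j ≤ (Nat.fib (2 * l.length + 1) : ℤ) ∧
      ((l.prod i j : ℤ) : ℝ) ≤ ((7 + 3 * √5) / 2) ^ l.length := by
  have hfib := list_prod_apply_le_fib hl i j
  refine ⟨hfib, ?_⟩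
  calc ((l.prod i j : ℤ) : ℝ) ≤ Nat.fib (2 * l.length + 1) := mod_cast hfib
    _ ≤ Real.goldenRatio ^ (2 * l.length) := fib_succ_le_goldenRatio_pow _
    _ ≤ ((7 + 3 * √5) / 2) ^ l.length := goldenRatio_pow_two_mul_le _

/-- For `n ≥ 3`, every entry of `B³ · C^(n−3)` (the cookie hash of the all-ones
string of length `n`) is at most `Nat.fib (2n+1)`, hence at most
`((7 + 3√5)/2)^n` as a real number. -/
theorem all_ones_hash_entry_bound (n : ℕ) (hn : 3 ≤ n) (i j : Fin 2) :
    (B ^ 3 * C ^ (n - 3)) i j ≤ (Nat.fib (2 * n + 1) : ℤ) ∧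
      (((B ^ 3 * C ^ (n - 3)) i j : ℤ) : ℝ) ≤ ((7 + 3 * Real.sqrt 5) / 2) ^ n := by
  have hBC : ∀ M ∈ List.replicate 3 B ++ List.replicate (n - 3) C, M = B ∨ M = C := by grind
  simpa only [List.prod_append, List.prod_replicate, List.length_append, List.length_replicate,
    Nat.add_sub_cancel' hn] using all_ones_hash_entry_bound_general hBC i j
end
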